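/- arXiv:math/0311467 — 5 statements merged into one kernel-verified Lean document; each statement's English description precedes it below -/
import Mathlib

section
/- For i ∈ {1,…,n−1} let D_i be the unique ℂ-derivation of B with D_i(x_{rs}) = [r = i+1]·x_{is} − [s = i]·x_{r,i+1}, and let D′_i be the unique ℂ-derivation of B with D′_i(x_{rs}) = [r = i]·x_{i+1,s} − [s = i+1]·x_{ri} (the Poisson brackets with x_{i,i+1} and x_{i+1,i} respectively). Let f ∈ B be the coefficient of t^d in det M(t). Then for every i ∈ {1,…,n−1}, D_i(f) lies in the ideal of B generated by f together with the variables x_{ab} with blk(a) ≤ blk(b); and for every i such that i and i+1 lie in the same block, D′_i(f) also lies in this ideal. (This expresses that {p, f} ⊂ S(m⁻)f + S(g)p for the parabolic subalgebra p.) -/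
open Finset MvPolynomial

noncomputable section

/-- Sum of the first `j` block sizes (blocks are 1-indexed). -/
def blkSum (c : ℕ → ℕ) (j : ℕ) : ℕ := ∑ i ∈ Finset.Icc 1 j, c i

/-- Block index of `a ∈ {1,…,n}`: the least `j` with `a ≤ c 1 + ⋯ + c j`. -/
def blk (c : ℕ → ℕ) (a : ℕ) : ℕ := sInf {j | a ≤ blkSum c j}

/-- The polynomial ring `B = ℂ[x_{ab} : 1 ≤ a, b ≤ n]` in all `n²` variables;
the variable `x_{ab}` (1-indexed) is `X (a-1, b-1)` (0-indexed). -/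
abbrev Bring (n : ℕ) : Type := MvPolynomial (Fin n × Fin n) ℂ

/-- The generic matrix `𝒳` of the nilradical: `(a,b)` entry `x_{ab}` if `blk a > blk b`,
and `0` otherwise. -/
def genXB (c : ℕ → ℕ) (n : ℕ) : Matrix (Fin n) (Fin n) (Bring n) :=
  Matrix.of fun a b =>
    if blk c (b.1 + 1) < blk c (a.1 + 1) then X (a, b) else 0

/-- The matrix `M(t)`: the `(n-c) × (n-c)` submatrix of `𝒳 + t · Id` consisting of
rows `c+1, …, n` and columns `1, …, n-c`, viewed over `B[t]`.  Here `m = n - c`. -/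
def MmatB (c : ℕ → ℕ) (n m : ℕ) (h : m + c 1 = n) :
    Matrix (Fin m) (Fin m) (Polynomial (Bring n)) :=
  Matrix.of fun i j =>
    Polynomial.C (genXB c n (Fin.cast h (i.addNat (c 1)))
        (Fin.castLE (le_trans (Nat.le_add_right m (c 1)) (le_of_eq h)) j))
      + if (Fin.cast h (i.addNat (c 1)) : Fin n)
            = Fin.castLE (le_trans (Nat.le_add_right m (c 1)) (le_of_eq h)) j
        then Polynomial.X else 0
/-- `d := Σᵢ max (cᵢ - c, 0)` (truncated subtraction). -/
def dBS (c : ℕ → ℕ) (l : ℕ) : ℕ := ∑ i ∈ Finset.Icc 1 l, (c i - c 1)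

/-- The Benlolo–Sanderson element: the coefficient of `t^d` in `det M(t)`, in `B`. -/
def BSfB (c : ℕ → ℕ) (l n m : ℕ) (h : m + c 1 = n) : Bring n :=
  ((MmatB c n m h).det).coeff (dBS c l)

/-!
Write `Y = 𝒳 + t · Id` and let `M` be its corner, the matrix `M(t)`. For `E_uv` in `p`, the
derivation `{x_uv, ·}` sends `Y` to the commutator `[E_uv, Y]` modulo the ideal generated by `p`, so
Jacobi's formula gives `{x_uv, det M} ≡ tr (adj M · [E_uv, Y])`, the commutator being cut down to
the corner.

A nonzero term of `det M` uses no entry above the diagonal blocks. Counting the rows and columns of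
each block that the corner keeps, it must then use at least `d` entries `t`, so `t ^ d` divides
`det M`; the same count applies to the entries of `adj M` that are needed below. Expanding the
commutator, each summand of the trace either vanishes, being a minor with a repeated row or column,
or contains one more entry from the lowest or highest diagonal block, which contributes another
factor `t`. Hence `t ^ (d + 1)` divides the trace, and the coefficient of `t ^ d` in `{x_uv, det M}`
vanishes modulo `p`.
-/

section Derivation

variable {R A : Type*} [CommRing R] [CommRing A] [Algebra R A]

lemma derivation_prod {M ι : Type*} [AddCommGroup M] [Module A M] [Module R M] [DecidableEq ι]
    (D : Derivation R A M) (s : Finset ι) (f : ι → A) :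
    D (∏ i ∈ s, f i) = ∑ i ∈ s, (∏ j ∈ s.erase i, f j) • D (f i) := by
  induction s using Finset.induction_on with
  | empty => simp
  | insert a s ha ih =>
    rw [prod_insert ha, D.leibniz, ih, sum_insert ha, erase_insert ha, smul_sum, add_comm]
    congr 1
    refine sum_congr rfl fun i hi => ?_
    have hai : a ≠ i := fun h => ha (h ▸ hi)
    rw [erase_insert_of_ne hai, prod_insert (by simp [ha]), mul_smul]

lemma derivation_det {ι : Type*} [Fintype ι] [DecidableEq ι] (D : Derivation R A A)
    (M : Matrix ι ι A) : D M.det = (M.adjugate * M.map D).trace := by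
  have cramer_entry (i : ι) :
      (M.adjugate * M.map D) i i = (M.updateCol i fun r => D (M r i)).det := by
    rw [← Matrix.cramer_apply, Matrix.cramer_eq_adjugate_mulVec]
    rfl
  have leibniz_term (σ : Equiv.Perm ι) : D (∏ i, M (σ i) i) =
      ∑ i, ∏ j, M.updateCol i (fun r => D (M r i)) (σ j) j := by
    rw [derivation_prod]
    refine sum_congr rfl fun i _ => ?_
    rw [← mul_prod_erase univ _ (mem_univ i), Matrix.updateCol_self, smul_eq_mul, mul_comm]
    congr 1
    exact prod_congr rfl fun j hj => by rw [Matrix.updateCol_ne (ne_of_mem_erase hj)]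
  simp only [Matrix.trace, Matrix.diag_apply, cramer_entry, Matrix.det_apply, Units.smul_def]
  rw [sum_comm, map_sum]
  simp only [map_zsmul, leibniz_term, smul_sum]

/-- The extension of a derivation `D` of `A` to `A[t]` with `D t = 0`, i.e. `D` applied to each
coefficient. -/
def coeffDerivation (D : Derivation R A A) : Derivation R (Polynomial A) (Polynomial A) :=
  (PolynomialModule.equivPolynomialSelf (R := A)).toLinearMap.compDer D.mapCoeffs

lemma coeff_coeffDerivation (D : Derivation R A A) (q : Polynomial A) (k : ℕ) :
    (coeffDerivation D q).coeff k = D (q.coeff k) := rfl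

lemma coeffDerivation_C (D : Derivation R A A) (a : A) :
    coeffDerivation D (Polynomial.C a) = Polynomial.C (D a) := by
  ext k
  rw [coeff_coeffDerivation, Polynomial.coeff_C, Polynomial.coeff_C, apply_ite D, map_zero]

lemma coeffDerivation_X (D : Derivation R A A) : coeffDerivation D Polynomial.X = 0 := by
  ext k
  rw [coeff_coeffDerivation, Polynomial.coeff_X, apply_ite D, map_zero, D.map_one_eq_zero, ite_self,
    Polynomial.coeff_zero]

end Derivation

section Coincidences

variable {κ α : Type*} [Fintype κ] [LinearOrder α]

/-- A lower bound, over the levels in `J`, for the number of coincidences `f (σ i) = g i` that any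
permutation `σ` with `g ≤ f ∘ σ` must have: at level `j`, the indices with `g i ≥ j` that cannot be
sent to an index with `f > j`. -/
def forcedCoincidences (f g : κ → α) (J : Finset α) : ℕ :=
  ∑ j ∈ J, (#{i | j ≤ g i} - #{i | j < f i})

lemma forcedCoincidences_comp_equiv (f g : κ → α) (J : Finset α) (σ : Equiv.Perm κ) :
    forcedCoincidences (f ∘ σ) g J = forcedCoincidences f g J := by
  have card_comp (j : α) : #{i | j < (f ∘ σ) i} = #{i | j < f i} :=
    card_equiv σ fun i => by simp
  simp only [forcedCoincidences, card_comp]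

lemma forcedCoincidences_le_card_eq {f g : κ → α} (hgf : g ≤ f) (J : Finset α) :
    forcedCoincidences f g J ≤ #{i | f i = g i} := by
  have level_le (j : α) :
      #{i | j ≤ g i} - #{i | j < f i} ≤ #{i ∈ ({i | f i = g i} : Finset κ) | g i = j} := by
    classical
    refine (le_card_sdiff _ _).trans (card_le_card fun i hi => ?_)
    simp only [mem_sdiff, mem_filter, mem_univ, true_and, not_lt] at hi ⊢
    obtain ⟨hjg, hfj⟩ := hi
    exact ⟨le_antisymm (hfj.trans hjg) (hgf i), le_antisymm ((hgf i).trans hfj) hjg⟩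
  calc forcedCoincidences f g J
      ≤ ∑ j ∈ J, #{i ∈ ({i | f i = g i} : Finset κ) | g i = j} := sum_le_sum fun j _ => level_le j
    _ ≤ #{i | f i = g i} := by
      rw [sum_card_fiberwise_eq_card_filter]
      exact card_filter_le _ _

end Coincidences

section BlockLowerMod

variable {κ ι ι' α A : Type*} [LinearOrder α] [CommRing A]

/-- `N` is block lower triangular for the gradings `f` of its rows and `g` of its columns, with
diagonal blocks divisible by `p`. -/
structure IsBlockLowerMod (p : A) (f : ι → α) (g : ι' → α) (N : Matrix ι ι' A) : Prop where
  eq_zero : ∀ r s, f r < g s → N r s = 0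
  dvd : ∀ r s, f r = g s → p ∣ N r s

lemma IsBlockLowerMod.submatrix {p : A} {f : ι → α} {g : ι' → α} {N : Matrix ι ι' A}
    (hN : IsBlockLowerMod p f g N) {κ' : Type*} (row : κ → ι) (col : κ' → ι') :
    IsBlockLowerMod p (f ∘ row) (g ∘ col) (N.submatrix row col) :=
  ⟨fun _ _ => hN.eq_zero _ _, fun _ _ => hN.dvd _ _⟩

variable [DecidableEq κ] {p : A} {f g : κ → α} {N : Matrix κ κ A}

lemma IsBlockLowerMod.updateRow_single (hN : IsBlockLowerMod p f g N) {r s : κ} (hsr : g s < f r) :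
    IsBlockLowerMod p f g (N.updateRow r (Pi.single s 1)) := by
  constructor <;> intro i j hij <;> by_cases hir : i = r
  · subst hir
    rw [Matrix.updateRow_self, Pi.single_eq_of_ne (by rintro rfl; exact hij.asymm hsr)]
  · rw [Matrix.updateRow_ne hir, hN.eq_zero i j hij]
  · subst hir
    rw [Matrix.updateRow_self, Pi.single_eq_of_ne (by rintro rfl; exact hsr.ne hij.symm)]
    exact dvd_zero p
  · rw [Matrix.updateRow_ne hir]
    exact hN.dvd i j hij

variable [Fintype κ]

lemma IsBlockLowerMod.pow_dvd_det (hN : IsBlockLowerMod p f g N) (J : Finset α) :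
    p ^ forcedCoincidences f g J ∣ N.det := by
  have pow_dvd_term (σ : Equiv.Perm κ) : p ^ forcedCoincidences f g J ∣ ∏ i, N (σ i) i := by
    by_cases hσ : g ≤ f ∘ σ
    · calc p ^ forcedCoincidences f g J
          ∣ p ^ #{i | (f ∘ σ) i = g i} := by
            rw [← forcedCoincidences_comp_equiv f g J σ]
            exact pow_dvd_pow p (forcedCoincidences_le_card_eq hσ J)
        _ = ∏ i with (f ∘ σ) i = g i, p := (prod_const p).symm
        _ ∣ ∏ i with (f ∘ σ) i = g i, N (σ i) i :=
            prod_dvd_prod_of_dvd _ _ fun i hi => hN.dvd _ _ (mem_filter.1 hi).2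
        _ ∣ ∏ i, N (σ i) i := prod_dvd_prod_of_subset _ _ _ (filter_subset _ _)
    · obtain ⟨i, hi⟩ : ∃ i, f (σ i) < g i := by simpa [Pi.le_def] using hσ
      rw [prod_eq_zero (f := fun i => N (σ i) i) (mem_univ i) (hN.eq_zero _ _ hi)]
      exact dvd_zero _
  rw [Matrix.det_apply']
  exact dvd_sum fun σ _ => (pow_dvd_term σ).mul_left _

lemma IsBlockLowerMod.pow_dvd_adjugate (hN : IsBlockLowerMod p f g N) (J : Finset α) {r s : κ}
    (hsr : g s < f r) : p ^ forcedCoincidences f g J ∣ N.adjugate s r := by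
  rw [Matrix.adjugate_apply]
  exact (hN.updateRow_single hsr).pow_dvd_det J

end BlockLowerMod

section ElementaryCommutator

variable {ι A : Type*} [Fintype ι] [DecidableEq ι] [Ring A]

/-- The commutator `[E_uv, N]` of the matrix `N` with an elementary matrix. -/
def elementaryCommutator (u v : ι) (N : Matrix ι ι A) : Matrix ι ι A :=
  ⁅(Matrix.single u v 1 : Matrix ι ι A), N⁆

lemma elementaryCommutator_apply (u v : ι) (N : Matrix ι ι A) (a b : ι) :
    elementaryCommutator u v N a b =
      (if a = u then N v b else 0) - if b = v then N a u else 0 := by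
  rw [elementaryCommutator, Ring.lie_def, Matrix.sub_apply]
  congr 1
  · split_ifs with ha
    · rw [ha, Matrix.single_mul_apply_same, one_mul]
    · exact Matrix.single_mul_apply_of_ne _ _ _ _ _ ha _
  · split_ifs with hb
    · rw [hb, Matrix.mul_single_apply_same, mul_one]
    · exact Matrix.mul_single_apply_of_ne _ _ _ _ _ hb _

end ElementaryCommutator

section Corner

variable {ι κ α A : Type*} [LinearOrder α] [CommRing A]
  {β : ι → α} {lo hi : α} {row col : κ → ι}

/-- `row` and `col` cut an `ι × ι` matrix, with blocks given by `β` and indexed within `[lo, hi]`,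
down to the rows outside the lowest block and the columns outside the highest one. -/
structure IsParabolicCorner (β : ι → α) (lo hi : α) (row col : κ → ι) : Prop where
  mem_Icc : ∀ a, β a ∈ Set.Icc lo hi
  row_injective : Function.Injective row
  range_row : Set.range row = {a | lo < β a}
  range_col : Set.range col = {a | β a < hi}

lemma IsParabolicCorner.eq_lo (h : IsParabolicCorner β lo hi row col) {a : ι}
    (ha : a ∉ Set.range row) : β a = lo := by
  rw [h.range_row, Set.mem_ofPred_eq, not_lt] at ha
  exact le_antisymm ha (h.mem_Icc a).1

lemma IsParabolicCorner.eq_hi (h : IsParabolicCorner β lo hi row col) {a : ι}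
    (ha : a ∉ Set.range col) : β a = hi := by
  rw [h.range_col, Set.mem_ofPred_eq, not_lt] at ha
  exact le_antisymm (h.mem_Icc a).2 ha

lemma IsParabolicCorner.lo_lt (h : IsParabolicCorner β lo hi row col) (r : κ) : lo < β (row r) :=
  h.range_row.subset ⟨r, rfl⟩

lemma IsParabolicCorner.lt_hi (h : IsParabolicCorner β lo hi row col) (s : κ) : β (col s) < hi :=
  h.range_col.subset ⟨s, rfl⟩

section BlockExcess

variable [Fintype ι]

/-- The degree `d = ∑ⱼ max (cⱼ - c, 0)`, where `cⱼ` is the size of the block of level `j` and `c`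
that of the highest block. -/
def blockExcess [LocallyFiniteOrder α] (β : ι → α) (lo hi : α) : ℕ :=
  ∑ j ∈ Icc lo hi, (#{a | β a = j} - #{a | β a = hi})

lemma IsParabolicCorner.blockExcess_le_forcedCoincidences [LocallyFiniteOrder α] [Fintype κ]
    (h : IsParabolicCorner β lo hi row col) :
    blockExcess β lo hi ≤ forcedCoincidences (β ∘ row) (β ∘ col) (Icc lo hi) := by
  classical
  refine sum_le_sum fun j _ => ?_
  have split : #{a | j ≤ β a} = #{a | β a = j} + #{a | j < β a} := by
    rw [← card_union_of_disjoint (disjoint_filter.2 fun a _ h h' => h'.ne h.symm), ← filter_or]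
    simp only [le_iff_eq_or_lt, eq_comm]
  have row_le : #{r | j < (β ∘ row) r} ≤ #{a | j < β a} :=
    card_le_card_of_injOn row (fun r hr => by simpa using hr) h.row_injective.injOn
  have le_col : #{a | j ≤ β a} ≤ #{s | j ≤ (β ∘ col) s} + #{a | β a = hi} := by
    have cover : ({a | j ≤ β a} : Finset ι) ⊆
        image col {s | j ≤ (β ∘ col) s} ∪ ({a | β a = hi} : Finset ι) := by
      intro a ha
      by_cases hcol : a ∈ Set.range col
      · obtain ⟨s, rfl⟩ := hcol
        exact mem_union_left _ (mem_image_of_mem col (by simpa using ha))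
      · exact mem_union_right _ (by simpa using h.eq_hi hcol)
    exact (card_le_card cover).trans ((card_union_le _ _).trans (by gcongr; exact card_image_le))
  omega

end BlockExcess

variable [Fintype κ] {p : A} {Y : Matrix ι ι A}

lemma trace_mul_submatrix_elementaryCommutator [Fintype ι] [DecidableEq ι] (u v : ι)
    (K : Matrix κ κ A) :
    (K * ((elementaryCommutator u v Y).submatrix row col)).trace =
      ∑ r with row r = u, (Y.submatrix id col * K) v r -
        ∑ s with col s = v, (K * Y.submatrix row id) s u := by
  simp only [Matrix.trace, Matrix.diag_apply, Matrix.mul_apply, Matrix.submatrix_apply,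
    elementaryCommutator_apply, mul_sub, sum_sub_distrib, mul_ite, mul_zero, sum_filter, id]
  congr 1
  · rw [sum_comm]
    refine sum_congr rfl fun r _ => ?_
    split_ifs <;> simp [mul_comm]
  · refine sum_congr rfl fun s _ => ?_
    split_ifs <;> simp

variable [DecidableEq κ]

/- The entry is `±` the minor with row `row r` replaced by row `v`. If `v` is a row of the corner
this minor has a repeated row; otherwise `v` lies in the lowest block, and row `v` is divisible
by `p`. -/
lemma IsParabolicCorner.pow_succ_dvd_mul_adjugate (h : IsParabolicCorner β lo hi row col)
    (hY : IsBlockLowerMod p β β Y) (J : Finset α) {v : ι} {r : κ} (hvr : row r ≠ v) :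
    p ^ (forcedCoincidences (β ∘ row) (β ∘ col) J + 1) ∣
      (Y.submatrix id col * (Y.submatrix row col).adjugate) v r := by
  by_cases hv : v ∈ Set.range row
  · obtain ⟨r', rfl⟩ := hv
    have corner_entry : (Y.submatrix id col * (Y.submatrix row col).adjugate) (row r') r =
        (Y.submatrix row col * (Y.submatrix row col).adjugate) r' r := rfl
    rw [corner_entry, Matrix.mul_adjugate, Matrix.smul_apply,
      Matrix.one_apply_ne (by rintro rfl; exact hvr rfl), smul_zero]
    exact dvd_zero _
  · have hlo := h.eq_lo hv
    rw [Matrix.mul_apply]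
    refine dvd_sum fun s _ => ?_
    rw [Matrix.submatrix_apply, id, pow_succ']
    rcases (h.mem_Icc (col s)).1.eq_or_lt with hs | hs
    · exact mul_dvd_mul (hY.dvd _ _ (hlo.trans hs))
        ((hY.submatrix row col).pow_dvd_adjugate J (hs.symm.trans_lt (h.lo_lt r)))
    · rw [hY.eq_zero _ _ (hlo.trans_lt hs), zero_mul]
      exact dvd_zero _

lemma IsParabolicCorner.pow_succ_dvd_adjugate_mul (h : IsParabolicCorner β lo hi row col)
    (hY : IsBlockLowerMod p β β Y) (J : Finset α) {u : ι} {s : κ} (hus : col s ≠ u) :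
    p ^ (forcedCoincidences (β ∘ row) (β ∘ col) J + 1) ∣
      ((Y.submatrix row col).adjugate * Y.submatrix row id) s u := by
  by_cases hu : u ∈ Set.range col
  · obtain ⟨s', rfl⟩ := hu
    have corner_entry : ((Y.submatrix row col).adjugate * Y.submatrix row id) s (col s') =
        ((Y.submatrix row col).adjugate * Y.submatrix row col) s s' := rfl
    rw [corner_entry, Matrix.adjugate_mul, Matrix.smul_apply,
      Matrix.one_apply_ne (by rintro rfl; exact hus rfl), smul_zero]
    exact dvd_zero _
  · have hhi := h.eq_hi hu
    rw [Matrix.mul_apply]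
    refine dvd_sum fun r _ => ?_
    rw [Matrix.submatrix_apply, id, pow_succ]
    rcases (h.mem_Icc (row r)).2.eq_or_lt with hr | hr
    · exact mul_dvd_mul
        ((hY.submatrix row col).pow_dvd_adjugate J ((h.lt_hi s).trans_eq hr.symm))
        (hY.dvd _ _ (hr.trans hhi.symm))
    · rw [hY.eq_zero _ _ (hr.trans_eq hhi.symm), mul_zero]
      exact dvd_zero _

lemma IsParabolicCorner.pow_succ_dvd_trace [Fintype ι] [DecidableEq ι]
    (h : IsParabolicCorner β lo hi row col) (hY : IsBlockLowerMod p β β Y) (J : Finset α)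
    {u v : ι} (huv : u ≠ v) :
    p ^ (forcedCoincidences (β ∘ row) (β ∘ col) J + 1) ∣
      ((Y.submatrix row col).adjugate * (elementaryCommutator u v Y).submatrix row col).trace := by
  rw [trace_mul_submatrix_elementaryCommutator]
  refine dvd_sub (dvd_sum fun r hr => ?_) (dvd_sum fun s hs => ?_)
  · exact h.pow_succ_dvd_mul_adjugate hY J fun hrv => huv ((mem_filter.1 hr).2.symm.trans hrv)
  · exact h.pow_succ_dvd_adjugate_mul hY J fun hsu => huv (hsu.symm.trans (mem_filter.1 hs).2)

end Corner

section Shift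

variable {ι κ α R A : Type*} [DecidableEq ι] [CommRing A]

/-- The matrix `N + t · Id` over `A[t]`. -/
def shiftByT (N : Matrix ι ι A) : Matrix ι ι (Polynomial A) :=
  N.map Polynomial.C + (Polynomial.X : Polynomial A) • 1

lemma shiftByT_apply (N : Matrix ι ι A) (a b : ι) :
    shiftByT N a b = Polynomial.C (N a b) + if a = b then Polynomial.X else 0 := by
  simp [shiftByT, Matrix.one_apply]

lemma elementaryCommutator_shiftByT [Fintype ι] (u v : ι) (N : Matrix ι ι A) :
    elementaryCommutator u v (shiftByT N) = (elementaryCommutator u v N).map Polynomial.C := by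
  simp [elementaryCommutator, shiftByT, Ring.lie_def, mul_add, add_mul, Matrix.map_sub,
    Matrix.map_mul, Matrix.map_single]

variable [CommRing R] [Algebra R A]

lemma shiftByT_map_coeffDerivation (D : Derivation R A A) (N : Matrix ι ι A) :
    (shiftByT N).map (coeffDerivation D) = (N.map D).map Polynomial.C := by
  ext1 a b
  simp [shiftByT_apply, apply_ite (coeffDerivation D), coeffDerivation_C, coeffDerivation_X]

variable [LinearOrder α] {β : ι → α} {lo hi : α} {row col : κ → ι} {N : Matrix ι ι A}

lemma isBlockLowerMod_shiftByT (hN : ∀ a b, β a ≤ β b → N a b = 0) :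
    IsBlockLowerMod Polynomial.X β β (shiftByT N) := by
  have entry {a b : ι} (hab : β a ≤ β b) :
      shiftByT N a b = if a = b then Polynomial.X else 0 := by
    rw [shiftByT_apply, hN a b hab, Polynomial.C_0, zero_add]
  refine ⟨fun a b hab => ?_, fun a b hab => ?_⟩
  · rw [entry hab.le, if_neg fun h => hab.ne (congrArg β h)]
  · rw [entry hab.le]
    split_ifs
    exacts [dvd_rfl, dvd_zero _]

/- By Jacobi's formula `D (det M)` is the trace of `adj M` times the corner of `D Y`, where
`Y = N + t · Id` and `M` is its corner. Modulo `I`, `D Y` is `[E_uv, Y]`, whose contribution is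
divisible by `t ^ (d + 1)`. -/
theorem IsParabolicCorner.derivation_coeff_det_mem [Fintype ι] [Fintype κ] [DecidableEq κ]
    [LocallyFiniteOrder α] (h : IsParabolicCorner β lo hi row col)
    (hN : ∀ a b, β a ≤ β b → N a b = 0) {u v : ι} (huv : u ≠ v) (D : Derivation R A A)
    {I : Ideal A} (hD : ∀ a b, D (N a b) - elementaryCommutator u v N a b ∈ I) :
    D (((shiftByT N).submatrix row col).det.coeff (blockExcess β lo hi)) ∈ I := by
  set Y := shiftByT N
  set M := Y.submatrix row col
  have trace_dvd : Polynomial.X ^ (blockExcess β lo hi + 1) ∣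
      (M.adjugate * (elementaryCommutator u v Y).submatrix row col).trace :=
    (pow_dvd_pow _ (Nat.succ_le_succ h.blockExcess_le_forcedCoincidences)).trans
      (h.pow_succ_dvd_trace (isBlockLowerMod_shiftByT hN) _ huv)
  have entry_mem (a b : ι) :
      (Y.map (coeffDerivation D) - elementaryCommutator u v Y) a b ∈ I.map Polynomial.C := by
    rw [shiftByT_map_coeffDerivation, elementaryCommutator_shiftByT, Matrix.sub_apply,
      Matrix.map_apply, Matrix.map_apply, Matrix.map_apply, ← Polynomial.C_sub]
    exact Ideal.mem_map_of_mem _ (hD a b)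
  have det_congr : coeffDerivation D M.det -
      (M.adjugate * (elementaryCommutator u v Y).submatrix row col).trace ∈
        I.map Polynomial.C := by
    rw [derivation_det, ← Matrix.submatrix_map, ← Matrix.trace_sub, ← Matrix.mul_sub]
    exact Ideal.sum_mem _ fun s _ => Ideal.sum_mem _ fun r _ =>
      Ideal.mul_mem_left _ _ (entry_mem _ _)
  simpa [coeff_coeffDerivation, Polynomial.X_pow_dvd_iff.1 trace_dvd _ (Nat.lt_succ_self _)]
    using Ideal.mem_map_C_iff.1 det_congr (blockExcess β lo hi)

end Shift

section Parabolic

variable {ι κ α R : Type*} [LinearOrder α] [CommRing R] {β : ι → α}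

/-- The matrix of coordinates of the nilradical opposite to the parabolic subalgebra with blocks
`β`: the generic matrix truncated strictly below its diagonal blocks. -/
def nilradicalMatrix (R : Type*) [CommRing R] (β : ι → α) :
    Matrix ι ι (MvPolynomial (ι × ι) R) :=
  Matrix.of fun a b => if β b < β a then X (a, b) else 0

/-- The ideal generated by the parabolic subalgebra `p` with blocks `β`, spanned by the `x_{ab}` on
and above the diagonal blocks. -/
def parabolicIdeal (R : Type*) [CommRing R] (β : ι → α) : Ideal (MvPolynomial (ι × ι) R) :=
  Ideal.span {q | ∃ a b, β a ≤ β b ∧ q = X (a, b)}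

lemma nilradicalMatrix_of_le {a b : ι} (hab : β a ≤ β b) : nilradicalMatrix R β a b = 0 :=
  if_neg hab.not_gt

lemma nilradicalMatrix_of_lt {a b : ι} (hab : β b < β a) :
    nilradicalMatrix R β a b = X (a, b) :=
  if_pos hab

lemma X_sub_nilradicalMatrix_mem (a b : ι) :
    X (a, b) - nilradicalMatrix R β a b ∈ parabolicIdeal R β := by
  rcases lt_or_ge (β b) (β a) with hab | hab
  · rw [nilradicalMatrix_of_lt hab, sub_self]
    exact zero_mem _
  · rw [nilradicalMatrix_of_le hab, sub_zero]
    exact Ideal.subset_span ⟨a, b, hab, rfl⟩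

variable [Fintype ι] [DecidableEq ι]

lemma derivation_nilradicalMatrix_sub_mem {u v : ι} (hβ : β v ≤ β u)
    (D : Derivation R (MvPolynomial (ι × ι) R) (MvPolynomial (ι × ι) R))
    (hD : ∀ a b, D (X (a, b)) = (if a = u then X (v, b) else 0) - if b = v then X (a, u) else 0)
    (a b : ι) :
    D (nilradicalMatrix R β a b) - elementaryCommutator u v (nilradicalMatrix R β) a b ∈
      parabolicIdeal R β := by
  rw [elementaryCommutator_apply]
  rcases le_or_gt (β a) (β b) with hab | hab
  · have row_eq_zero : (if a = u then nilradicalMatrix R β v b else 0) = 0 :=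
      ite_eq_right_iff.2 fun ha => nilradicalMatrix_of_le (hβ.trans (ha ▸ hab))
    have col_eq_zero : (if b = v then nilradicalMatrix R β a u else 0) = 0 :=
      ite_eq_right_iff.2 fun hb => nilradicalMatrix_of_le (hab.trans (hb ▸ hβ))
    simp [nilradicalMatrix_of_le hab, row_eq_zero, col_eq_zero]
  · have regroup : D (nilradicalMatrix R β a b) -
        ((if a = u then nilradicalMatrix R β v b else 0) -
          if b = v then nilradicalMatrix R β a u else 0) =
        (if a = u then X (v, b) - nilradicalMatrix R β v b else 0) -
          if b = v then X (a, u) - nilradicalMatrix R β a u else 0 := by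
      rw [nilradicalMatrix_of_lt hab, hD]
      split_ifs <;> ring
    rw [regroup]
    refine sub_mem ?_ ?_ <;> split_ifs
    exacts [X_sub_nilradicalMatrix_mem v b, zero_mem _, X_sub_nilradicalMatrix_mem a u, zero_mem _]

theorem poisson_bracket_parabolic_BS_mem_span_general [Fintype κ] [DecidableEq κ]
    [LocallyFiniteOrder α] {lo hi : α} {row col : κ → ι}
    (h : IsParabolicCorner β lo hi row col) {u v : ι} (huv : u ≠ v) (hβ : β v ≤ β u)
    (D : Derivation R (MvPolynomial (ι × ι) R) (MvPolynomial (ι × ι) R))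
    (hD : ∀ a b, D (X (a, b)) = (if a = u then X (v, b) else 0) - if b = v then X (a, u) else 0) :
    D (((shiftByT (nilradicalMatrix R β)).submatrix row col).det.coeff (blockExcess β lo hi)) ∈
      parabolicIdeal R β :=
  h.derivation_coeff_det_mem (fun _ _ => nilradicalMatrix_of_le) huv D
    (derivation_nilradicalMatrix_sub_mem hβ D hD)

end Parabolic

section Blocks

lemma blkSum_zero (c : ℕ → ℕ) : blkSum c 0 = 0 := by simp [blkSum]

lemma blkSum_one (c : ℕ → ℕ) : blkSum c 1 = c 1 := by simp [blkSum]

lemma blkSum_succ (c : ℕ → ℕ) (j : ℕ) : blkSum c (j + 1) = blkSum c j + c (j + 1) :=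
  sum_Icc_succ_top (by omega) c

lemma blkSum_mono (c : ℕ → ℕ) : Monotone (blkSum c) :=
  fun _ _ hij => sum_le_sum_of_subset (Icc_subset_Icc_right hij)

lemma blk_le_iff {c : ℕ → ℕ} {l a : ℕ} (ha : a ≤ blkSum c l) (j : ℕ) :
    blk c a ≤ j ↔ a ≤ blkSum c j :=
  ⟨fun h => (Nat.sInf_mem (s := {j | a ≤ blkSum c j}) ⟨l, ha⟩).trans (blkSum_mono c h),
    fun h => Nat.sInf_le h⟩

lemma blk_mono {c : ℕ → ℕ} {l a b : ℕ} (hab : a ≤ b) (hb : b ≤ blkSum c l) :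
    blk c a ≤ blk c b :=
  (blk_le_iff (hab.trans hb) _).2 (hab.trans ((blk_le_iff hb _).1 le_rfl))

variable {c : ℕ → ℕ} {l n m : ℕ}

lemma blk_succ_le_iff (hn : n = blkSum c l) (a : Fin n) (j : ℕ) :
    blk c (a + 1) ≤ j ↔ (a : ℕ) < blkSum c j :=
  blk_le_iff (a.isLt.trans_eq hn) j

lemma card_blk_eq (hn : n = blkSum c l) {j : ℕ} (hj : j ∈ Icc 1 l) :
    #{a : Fin n | blk c (a + 1) = j} = c j := by
  obtain ⟨hj1, hjl⟩ := mem_Icc.1 hj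
  obtain ⟨k, rfl⟩ : ∃ k, j = k + 1 := ⟨j - 1, by omega⟩
  have card_blk_le {i : ℕ} (hi : i ≤ l) : #{a : Fin n | blk c (a + 1) ≤ i} = blkSum c i := by
    simp only [blk_succ_le_iff hn, Fin.card_filter_val_lt]
    exact min_eq_right (hn ▸ blkSum_mono c hi)
  have split : #{a : Fin n | blk c (a + 1) ≤ k + 1} =
      #{a : Fin n | blk c (a + 1) ≤ k} + #{a : Fin n | blk c (a + 1) = k + 1} := by
    rw [← card_union_of_disjoint (disjoint_filter.2 fun a _ h h' => by omega), ← filter_or]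
    simp only [Nat.le_succ_iff]
  rw [card_blk_le hjl, card_blk_le (by omega), blkSum_succ] at split
  omega

lemma dBS_eq_blockExcess (hl : 0 < l) (hcl : c l = c 1) (hn : n = blkSum c l) :
    dBS c l = blockExcess (fun a : Fin n => blk c (a + 1)) 1 l :=
  sum_congr rfl fun j hj => by
    rw [card_blk_eq hn hj, card_blk_eq hn (mem_Icc.2 ⟨hl, le_rfl⟩), hcl]

lemma isParabolicCorner_blk (hl : 0 < l) (hcl : c l = c 1) (hn : n = blkSum c l)
    (hm : m + c 1 = n) :
    IsParabolicCorner (fun a : Fin n => blk c (a + 1)) 1 l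
      (fun i : Fin m => Fin.cast hm (i.addNat (c 1)))
      (Fin.castLE ((Nat.le_add_right m (c 1)).trans hm.le)) where
  mem_Icc a := by
    refine ⟨?_, (blk_succ_le_iff hn a l).2 (hn ▸ a.isLt)⟩
    have blk_le_zero := blk_succ_le_iff hn a 0
    rw [blkSum_zero] at blk_le_zero
    omega
  row_injective i j hij := by simpa [Fin.ext_iff] using hij
  range_row := by
    ext a
    rw [Set.mem_ofPred_eq, ← not_le, blk_succ_le_iff hn, blkSum_one, not_lt]
    constructor
    · rintro ⟨i, rfl⟩
      simp
    · exact fun ha => ⟨⟨a - c 1, by omega⟩, Fin.ext (Nat.sub_add_cancel ha)⟩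
  range_col := by
    obtain ⟨k, rfl⟩ : ∃ k, l = k + 1 := ⟨l - 1, by omega⟩
    have hk : blkSum c k = m := by
      rw [blkSum_succ, hcl, ← hm] at hn
      exact (Nat.add_right_cancel hn).symm
    ext a
    rw [Set.mem_ofPred_eq, Nat.lt_succ_iff, blk_succ_le_iff hn, hk]
    constructor
    · rintro ⟨i, rfl⟩
      exact i.isLt
    · exact fun ha => ⟨⟨a, ha⟩, rfl⟩

lemma BSfB_eq_coeff_det (hl : 0 < l) (hcl : c l = c 1) (hn : n = blkSum c l) (hm : m + c 1 = n) :
    BSfB c l n m hm =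
      ((shiftByT (nilradicalMatrix ℂ fun a : Fin n => blk c (a + 1))).submatrix
        (fun i : Fin m => Fin.cast hm (i.addNat (c 1)))
        (Fin.castLE ((Nat.le_add_right m (c 1)).trans hm.le))).det.coeff
          (blockExcess (fun a : Fin n => blk c (a + 1)) 1 l) := by
  rw [BSfB, dBS_eq_blockExcess hl hcl hn]
  congr 2
  ext1 i j
  rw [Matrix.submatrix_apply, shiftByT_apply]
  rfl

theorem derivation_BSfB_mem_span (hl : 0 < l) (hcl : c l = c 1) (hn : n = blkSum c l)
    (hm : m + c 1 = n) {u v : Fin n} (huv : u ≠ v) (hblk : blk c (v + 1) ≤ blk c (u + 1))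
    (D : Derivation ℂ (Bring n) (Bring n))
    (hD : ∀ a b, D (X (a, b)) = (if a = u then X (v, b) else 0) - if b = v then X (a, u) else 0) :
    D (BSfB c l n m hm) ∈ Ideal.span (insert (BSfB c l n m hm)
      {q : Bring n | ∃ a b : Fin n, blk c (a.1 + 1) ≤ blk c (b.1 + 1) ∧ q = X (a, b)}) := by
  refine Ideal.span_mono (Set.subset_insert _ _) ?_
  rw [BSfB_eq_coeff_det hl hcl hn hm]
  exact poisson_bracket_parabolic_BS_mem_span_general (isParabolicCorner_blk hl hcl hn hm) huv
    hblk D hD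

end Blocks

/-- Lemma 3.11: `{p, f} ⊆ S(m⁻) f + S(g) p`.  For every `i ∈ {1,…,n-1}` the bracket
`D_i f = {x_{i,i+1}, f}` lies in the ideal generated by `f` and the coordinates of the
parabolic `p`, and for every `i` with `i, i+1` in the same block so does
`D'_i f = {x_{i+1,i}, f}`. -/
theorem poisson_bracket_parabolic_BS_mem_span
    (l : ℕ) (hl : 2 ≤ l) (c : ℕ → ℕ) (hc : ∀ i ∈ Finset.Icc 1 l, 0 < c i)
    (hcl : c l = c 1) (n : ℕ) (hn0 : 0 < n) (hn : n = blkSum c l)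
    (m : ℕ) (hm : m + c 1 = n) :
    (∀ p : ℕ, ∀ _ : 1 ≤ p, ∀ _ : p ≤ n - 1,
      ∀ D : Derivation ℂ (Bring n) (Bring n),
        (∀ r s : Fin n, D (X (r, s)) =
            (if (r : ℕ) = p then X ((⟨p - 1, by omega⟩ : Fin n), s) else 0)
              - (if (s : ℕ) + 1 = p then X (r, (⟨p, by omega⟩ : Fin n)) else 0)) →
        D (BSfB c l n m hm) ∈
          Ideal.span (insert (BSfB c l n m hm)
            {q : Bring n | ∃ a b : Fin n,
              blk c (a.1 + 1) ≤ blk c (b.1 + 1) ∧ q = X (a, b)})) ∧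
    (∀ p : ℕ, ∀ _ : 1 ≤ p, ∀ _ : p ≤ n - 1, blk c p = blk c (p + 1) →
      ∀ D' : Derivation ℂ (Bring n) (Bring n),
        (∀ r s : Fin n, D' (X (r, s)) =
            (if (r : ℕ) + 1 = p then X ((⟨p, by omega⟩ : Fin n), s) else 0)
              - (if (s : ℕ) = p then X (r, (⟨p - 1, by omega⟩ : Fin n)) else 0)) →
        D' (BSfB c l n m hm) ∈
          Ideal.span (insert (BSfB c l n m hm)
            {q : Bring n | ∃ a b : Fin n,
              blk c (a.1 + 1) ≤ blk c (b.1 + 1) ∧ q = X (a, b)})) := by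
  have pred_iff {p : ℕ} (hp : 1 ≤ p) (x : ℕ) : x = p - 1 ↔ x + 1 = p := by omega
  constructor
  · intro p hp hpn D hD
    have huv : (⟨p, by omega⟩ : Fin n) ≠ ⟨p - 1, by omega⟩ := Fin.ne_of_val_ne (by grind)
    refine derivation_BSfB_mem_span (by omega) hcl hn hm huv ?_ D fun r s => ?_
    · exact blk_mono (l := l) (by grind) (by grind)
    · simp only [hD, Fin.ext_iff, pred_iff hp]
  · intro p hp hpn hblk D' hD'
    have huv : (⟨p - 1, by omega⟩ : Fin n) ≠ ⟨p, by omega⟩ := Fin.ne_of_val_ne (by grind)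
    refine derivation_BSfB_mem_span (by omega) hcl hn hm huv ?_ D' fun r s => ?_
    · exact (hblk.symm.trans (by rw [Nat.sub_add_cancel hp])).le
    · simp only [hD', Fin.ext_iff, pred_iff hp]

end
end

section
/- Let n, r, s be positive integers, let A be a commutative ring and t ∈ A, and let M be the n×n matrix over A with entries M_{ij} = t if j = i + s, M_{ij} = 1 if i = j + r, and M_{ij} = 0 otherwise (indices 1 ≤ i,j ≤ n; this is the matrix of t·e^s + f^r, where e and f are the down- and up-shift operators on a basis v_1,…,v_n). Then: if r+s does not divide n, det M = 0; and if n = h·(r+s) for a positive integer h, then det M = ε·t^{rh} for some sign ε ∈ {1, −1} (the paper records this sign as (−1)^{(r+s)h}). -/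
/-!
Rotate the first `r + s` columns of the matrix of size `r + s + n` cyclically by `s`. In blocks of
sizes `r`, `s`, `n` it becomes `[[t, 0, 0], [0, 1, *], [*, 0, N]]`, where `N` is the same matrix
of size `n`, and its determinant is `t ^ r * det N`. The rotation has sign `(-1) ^ (r * s)`, so
passing from size `n` to size `r + s + n` multiplies the determinant by `(-1) ^ (r * s) * t ^ r`.
This leaves the sizes `n < r + s`: for `n = 0` the determinant is `1`, and for `0 < n < r + s` the
row in position `min r n`, counted from one, is zero.

The resulting sign is `(-1) ^ (r * s * h)`. It differs from `(-1) ^ ((r + s) * h)` already for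
`r = s = h = 1`, where `det !![0, t; 1, 0] = -t`.
-/

open Matrix Equiv

section Rotation

theorem val_finRotate_pow_apply {m : ℕ} (k : ℕ) (i : Fin m) :
    ((finRotate m ^ k) i : ℕ) = (i + k) % m := by
  have := i.neZero
  induction k with
  | zero => simp [Nat.mod_eq_of_lt i.isLt]
  | succ k ih =>
    rw [pow_succ', Perm.mul_apply, finRotate_apply, Fin.val_add, ih, Fin.val_one', ← Nat.add_mod,
      Nat.add_assoc]

variable (r s n : ℕ)

theorem sign_finRotate_pow : Perm.sign (finRotate (r + s) ^ s) = (-1) ^ (r * s) := by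
  have parity : Even ((r + s - 1) * s) ↔ Even (r * s) := by
    rcases s with - | s
    · simp
    · rw [← Nat.add_assoc, Nat.add_sub_cancel]
      grind
  rw [map_pow, sign_finRotate, ← pow_mul, neg_one_pow_congr parity]

/-- The permutation of `{0, …, r + s + n - 1}` that rotates the first `r + s` elements cyclically
by `s` and fixes the last `n`. -/
def headRotation : Perm (Fin (r + s + n)) :=
  finSumFinEquiv.permCongr (Perm.sumCongr (finRotate (r + s) ^ s) 1)

theorem sign_headRotation : Perm.sign (headRotation r s n) = (-1) ^ (r * s) := by
  rw [headRotation, Perm.sign_permCongr, Perm.sign_sumCongr, sign_finRotate_pow, map_one, mul_one]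

/-- The division of `{0, …, r + s + n - 1}` into consecutive blocks of lengths `r`, `s` and `n`,
used to read matrices of size `r + s + n` as block matrices. -/
def threeBlockEquiv : Fin r ⊕ Fin s ⊕ Fin n ≃ Fin (r + s + n) :=
  (sumAssoc _ _ _).symm.trans ((sumCongr finSumFinEquiv (.refl _)).trans finSumFinEquiv)

variable {r s n}

theorem val_threeBlockEquiv_inl (i : Fin r) : (threeBlockEquiv r s n (.inl i) : ℕ) = i := by
  simp [threeBlockEquiv]

theorem val_threeBlockEquiv_inr_inl (i : Fin s) :
    (threeBlockEquiv r s n (.inr (.inl i)) : ℕ) = r + i := by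
  simp [threeBlockEquiv]

theorem val_threeBlockEquiv_inr_inr (i : Fin n) :
    (threeBlockEquiv r s n (.inr (.inr i)) : ℕ) = r + s + i := by
  simp [threeBlockEquiv]

theorem val_headRotation_threeBlockEquiv_inl (i : Fin r) :
    (headRotation r s n (threeBlockEquiv r s n (.inl i)) : ℕ) = i + s := by
  simp [headRotation, threeBlockEquiv, val_finRotate_pow_apply, Nat.mod_eq_of_lt]

theorem val_headRotation_threeBlockEquiv_inr_inl (i : Fin s) :
    (headRotation r s n (threeBlockEquiv r s n (.inr (.inl i))) : ℕ) = i := by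
  have : (r + i + s) % (r + s) = i := by
    rw [Nat.add_right_comm, Nat.add_mod_left, Nat.mod_eq_of_lt (by lia)]
  simp [headRotation, threeBlockEquiv, val_finRotate_pow_apply, this]

theorem val_headRotation_threeBlockEquiv_inr_inr (i : Fin n) :
    (headRotation r s n (threeBlockEquiv r s n (.inr (.inr i))) : ℕ) = r + s + i := by
  simp [headRotation, threeBlockEquiv]

end Rotation

section ShiftMatrix

variable {A : Type*}

/-- The matrix of `t·e^s + u·f^r`, for the shifts `e v_i = v_{i-1}` and `f v_i = v_{i+1}` of a basis
`v_1, …, v_n`. The extra coefficient `u` makes the two shifts play symmetric roles. When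
`r = s = 0` the two conditions coincide, and the diagonal is `t` rather than `t + u`. -/
def shiftMatrix [Zero A] (n r s : ℕ) (t u : A) : Matrix (Fin n) (Fin n) A :=
  of fun i j => if (j : ℕ) = i + s then t else if (i : ℕ) = j + r then u else 0

theorem shiftMatrix_submatrix_headRotation [Zero A] (n r s : ℕ) (t u : A) :
    ((shiftMatrix (r + s + n) r s t u).submatrix id (headRotation r s n)).submatrix
        (threeBlockEquiv r s n) (threeBlockEquiv r s n) =
      fromBlocks (diagonal fun _ => t) 0
        (fromRows 0 (of fun (i : Fin n) (j : Fin r) => if (i : ℕ) = j then u else 0))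
        (fromBlocks (diagonal fun _ => u)
          (of fun (i : Fin s) (j : Fin n) => if (i : ℕ) = j then t else 0)
          0 (shiftMatrix n r s t u)) := by
  ext (i | i | i) (j | j | j) <;>
    simp only [shiftMatrix, submatrix_apply, id_eq, of_apply, fromBlocks_apply₁₁,
      fromBlocks_apply₁₂, fromBlocks_apply₂₁, fromBlocks_apply₂₂, fromRows_apply_inl,
      fromRows_apply_inr, Matrix.zero_apply, diagonal_apply, Fin.ext_iff, val_threeBlockEquiv_inl,
      val_threeBlockEquiv_inr_inl, val_threeBlockEquiv_inr_inr,
      val_headRotation_threeBlockEquiv_inl, val_headRotation_threeBlockEquiv_inr_inl,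
      val_headRotation_threeBlockEquiv_inr_inr] <;>
    grind

variable [CommRing A]

theorem det_shiftMatrix_add (n r s : ℕ) (t u : A) :
    (shiftMatrix (r + s + n) r s t u).det =
      (-1) ^ (r * s) * t ^ r * u ^ s * (shiftMatrix n r s t u).det := by
  have rotated : (-1) ^ (r * s) * (shiftMatrix (r + s + n) r s t u).det =
      t ^ r * (u ^ s * (shiftMatrix n r s t u).det) := by
    have h := congrArg det (shiftMatrix_submatrix_headRotation n r s t u)
    simpa only [det_submatrix_equiv_self, det_permute', sign_headRotation, det_fromBlocks_zero₁₂,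
      det_fromBlocks_zero₂₁, det_diagonal, Finset.prod_const, Finset.card_univ, Fintype.card_fin,
      Units.val_pow_eq_pow_val, Units.val_neg, Units.val_one, Int.cast_pow, Int.cast_neg,
      Int.cast_one] using h
  calc (shiftMatrix (r + s + n) r s t u).det
      = (-1) ^ (r * s) * ((-1) ^ (r * s) * (shiftMatrix (r + s + n) r s t u).det) := by
        rw [← mul_assoc, ← mul_pow, neg_one_mul, neg_neg, one_pow, one_mul]
    _ = (-1) ^ (r * s) * t ^ r * u ^ s * (shiftMatrix n r s t u).det := by rw [rotated]; ring

theorem det_shiftMatrix_mul_add (h n r s : ℕ) (t u : A) :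
    (shiftMatrix (h * (r + s) + n) r s t u).det =
      ((-1) ^ (r * s) * t ^ r * u ^ s) ^ h * (shiftMatrix n r s t u).det := by
  induction h with
  | zero => rw [Nat.zero_mul, Nat.zero_add, pow_zero, one_mul]
  | succ h ih =>
    rw [show (h + 1) * (r + s) + n = r + s + (h * (r + s) + n) by ring, det_shiftMatrix_add, ih]
    ring

theorem det_shiftMatrix_mul (h r s : ℕ) (t u : A) :
    (shiftMatrix (h * (r + s)) r s t u).det =
      (-1) ^ (r * s * h) * t ^ (r * h) * u ^ (s * h) := by
  have := det_shiftMatrix_mul_add h 0 r s t u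
  rw [Nat.add_zero, det_fin_zero, mul_one] at this
  rw [this, mul_pow, mul_pow, ← pow_mul, ← pow_mul, ← pow_mul]

theorem det_shiftMatrix_of_lt {n r s : ℕ} (hn : 0 < n) (hr : 0 < r) (hs : 0 < s) (h : n < r + s)
    (t u : A) : (shiftMatrix n r s t u).det = 0 := by
  refine det_eq_zero_of_row_eq_zero ⟨min r n - 1, by lia⟩ fun j => ?_
  rw [shiftMatrix, of_apply, if_neg (by lia), if_neg (by lia)]

theorem det_shiftMatrix_of_not_dvd {n r s : ℕ} (hr : 0 < r) (hs : 0 < s) (h : ¬ r + s ∣ n)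
    (t u : A) : (shiftMatrix n r s t u).det = 0 := by
  have hpos : 0 < n % (r + s) := Nat.pos_of_ne_zero (mt Nat.dvd_of_mod_eq_zero h)
  have hlt : n % (r + s) < r + s := Nat.mod_lt n (by lia)
  rw [← Nat.div_add_mod' n (r + s), det_shiftMatrix_mul_add, det_shiftMatrix_of_lt hpos hr hs hlt,
    mul_zero]

end ShiftMatrix

/-- Lemma 3.14: let `M` be the `n × n` matrix of `t·e^s + f^r`, where `e, f` are the down- and
up-shift endomorphisms, i.e. `M_{ij} = t` if `j = i + s`, `M_{ij} = 1` if `i = j + r` and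
`M_{ij} = 0` otherwise (1-indexed).  If `r + s` does not divide `n` then `det M = 0`, and if
`n = h (r + s)` with `h > 0` then `det M = ± t^{r h}`. -/
theorem det_shift_matrix
    (n r s : ℕ) (hn : 0 < n) (hr : 0 < r) (hs : 0 < s)
    {A : Type*} [CommRing A] (t : A)
    (M : Matrix (Fin n) (Fin n) A)
    (hM : M = Matrix.of fun i j : Fin n =>
      if (j : ℕ) = (i : ℕ) + s then t else if (i : ℕ) = (j : ℕ) + r then 1 else 0) :
    (¬ (r + s) ∣ n → M.det = 0) ∧
    (∀ h : ℕ, 0 < h → n = h * (r + s) →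
      ∃ ε : A, (ε = 1 ∨ ε = -1) ∧ M.det = ε * t ^ (r * h)) := by
  obtain rfl : M = shiftMatrix n r s t 1 := hM
  refine ⟨fun hd => det_shiftMatrix_of_not_dvd hr hs hd t 1, ?_⟩
  rintro h - rfl
  refine ⟨(-1) ^ (r * s * h), neg_one_pow_eq_or A _, ?_⟩
  rw [det_shiftMatrix_mul, one_pow, mul_one]
end

section
/- The Benlolo–Sanderson element f is a weight vector of weight −(β_1+⋯+β_c) for the diagonal torus: for every monomial ∏_{(a,b)∈P} x_{ab}^{ν(a,b)} occurring with nonzero coefficient in f, and every q ∈ {1,…,n}, one has Σ_{(a,b)∈P} ν(a,b)·([a = q] − [b = q]) = 1 if q > n−c, −1 if q ≤ c, and 0 otherwise (here β_i = α_i + α_{i+1} + ⋯ + α_{n−i} = ε_i − ε_{n+1−i}). -/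
open Finset MvPolynomial

noncomputable section

/-- The index set `P` of positions of the nilradical `m`: pairs `(a, b)` of indices
(0-indexed here, representing the 1-indexed pair `(a+1, b+1)`) with `b < a` and
`blk (b+1) < blk (a+1)`. -/
abbrev Pos (c : ℕ → ℕ) (n : ℕ) : Type :=
  {p : Fin n × Fin n // p.2 < p.1 ∧ blk c (p.2.1 + 1) < blk c (p.1.1 + 1)}

/-- The generic matrix `𝒳` of the nilradical `m`. -/
def genX (c : ℕ → ℕ) (n : ℕ) : Matrix (Fin n) (Fin n) (MvPolynomial (Pos c n) ℂ) :=
  Matrix.of fun a b =>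
    if h : b < a ∧ blk c (b.1 + 1) < blk c (a.1 + 1) then X (⟨(a, b), h⟩ : Pos c n) else 0

/-- The matrix `M(t)`: the `(n-c) × (n-c)` submatrix of `𝒳 + t · Id` consisting of
rows `c+1, …, n` and columns `1, …, n-c`, viewed over `R[t]`.  Here `m = n - c`. -/
def Mmat (c : ℕ → ℕ) (n m : ℕ) (h : m + c 1 = n) :
    Matrix (Fin m) (Fin m) (Polynomial (MvPolynomial (Pos c n) ℂ)) :=
  Matrix.of fun i j =>
    Polynomial.C (genX c n (Fin.cast h (i.addNat (c 1)))
        (Fin.castLE (le_trans (Nat.le_add_right m (c 1)) (le_of_eq h)) j))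
      + if (Fin.cast h (i.addNat (c 1)) : Fin n)
            = Fin.castLE (le_trans (Nat.le_add_right m (c 1)) (le_of_eq h)) j
        then Polynomial.X else 0

/-- The Benlolo–Sanderson element: the coefficient of `t^d` in `det M(t)`. -/
def BSf (c : ℕ → ℕ) (l n m : ℕ) (h : m + c 1 = n) : MvPolynomial (Pos c n) ℂ :=
  ((Mmat c n m h).det).coeff (dBS c l)

/-- The point of the nilradical determined by `ξ : P → ℂ`. -/
def Xpt (c : ℕ → ℕ) (n : ℕ) (ξ : Pos c n → ℂ) : Matrix (Fin n) (Fin n) ℂ :=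
  Matrix.of fun a b =>
    if h : b < a ∧ blk c (b.1 + 1) < blk c (a.1 + 1) then ξ ⟨(a, b), h⟩ else 0

/-!
Give `R` its grading by the character lattice `ℤⁿ` of the diagonal torus, with `x_{ab}` in degree
`ε_a - ε_b`, and extend it to `R[t]` by placing `t` in degree `0`. The entry of `𝒳 + t · Id` at
`(a, b)` is then homogeneous of degree `ε_a - ε_b`, the diagonal `t` included since there `a = b`.
Hence every term of the Leibniz expansion of a minor has the same degree, namely the sum of `ε_a`
over its rows minus the sum of `ε_b` over its columns. For `M(t)`, with rows `c+1, …, n` and columns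
`1, …, n-c`, the indices common to rows and columns cancel.
-/

theorem det_mem_graded {ι R σ κ : Type*} [AddCommMonoid ι] [CommRing R] [SetLike σ R]
    [AddSubgroupClass σ R] [Fintype κ] [DecidableEq κ] (𝒜 : ι → σ) [SetLike.GradedMonoid 𝒜]
    {A : Matrix κ κ R} {r s : κ → ι} (hA : ∀ i j, A i j ∈ 𝒜 (r i + s j)) :
    A.det ∈ 𝒜 (∑ i, r i + ∑ j, s j) := by
  rw [Matrix.det_apply']
  refine sum_mem fun τ _ => ?_
  have hτ : ∏ i, A (τ i) i ∈ 𝒜 (∑ i, r i + ∑ j, s j) := by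
    rw [← Equiv.sum_comp τ r, ← Finset.sum_add_distrib]
    exact SetLike.prod_mem_graded 𝒜 _ _ fun i _ => hA (τ i) i
  rw [← zsmul_eq_mul]
  exact zsmul_mem hτ _

section CoeffGrading

variable {ι k R : Type*} [CommSemiring k] [Semiring R] [Module k R]

/-- The grading of `R[t]` extending a grading `𝒜` of `R` and having `t` in degree `0`: the piece of
degree `i` consists of the polynomials all of whose coefficients lie in `𝒜 i`. -/
def coeffGrading (𝒜 : ι → Submodule k R) (i : ι) : Submodule k (Polynomial R) where
  carrier := {p | ∀ j, p.coeff j ∈ 𝒜 i}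
  zero_mem' _ := by simp only [Polynomial.coeff_zero, zero_mem]
  add_mem' hp hq j := by simpa only [Polynomial.coeff_add] using add_mem (hp j) (hq j)
  smul_mem' a p hp j := by simpa only [Polynomial.coeff_smul] using (𝒜 i).smul_mem a (hp j)

variable {𝒜 : ι → Submodule k R}

theorem C_mem_coeffGrading {i : ι} {a : R} (ha : a ∈ 𝒜 i) :
    Polynomial.C a ∈ coeffGrading 𝒜 i := fun j => by
  rw [Polynomial.coeff_C]
  split_ifs
  exacts [ha, zero_mem _]

theorem X_mem_coeffGrading [Zero ι] [SetLike.GradedOne 𝒜] :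
    Polynomial.X ∈ coeffGrading 𝒜 0 := fun j => by
  rw [Polynomial.coeff_X]
  split_ifs
  exacts [SetLike.one_mem_graded 𝒜, zero_mem _]

instance coeffGrading.gradedMonoid [AddMonoid ι] [SetLike.GradedMonoid 𝒜] :
    SetLike.GradedMonoid (coeffGrading 𝒜) where
  one_mem := C_mem_coeffGrading (SetLike.one_mem_graded 𝒜)
  mul_mem _ _ p q hp hq j := by
    rw [Polynomial.coeff_mul]
    exact sum_mem fun x _ => SetLike.mul_mem_graded (hp x.1) (hq x.2)

end CoeffGrading

theorem sum_single_eq_indicator_range {κ α M : Type*} [Fintype κ] [DecidableEq α]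
    [AddCommMonoid M] [One M] {e : κ → α} (he : Function.Injective e) :
    ∑ i, (Pi.single (e i) 1 : α → M) = (Set.range e).indicator 1 := by
  ext a
  rw [Finset.sum_apply]
  by_cases ha : a ∈ Set.range e
  · obtain ⟨i, rfl⟩ := ha
    rw [Set.indicator_of_mem (Set.mem_range_self i), Finset.sum_eq_single_of_mem i (mem_univ i)]
    · rw [Pi.single_eq_same, Pi.one_apply]
    · exact fun j _ hji => Pi.single_eq_of_ne (he.ne hji).symm _
  · rw [Set.indicator_of_notMem ha]
    exact Finset.sum_eq_zero fun i _ => Pi.single_eq_of_ne (fun h => ha ⟨i, h.symm⟩) _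

/-- The torus weight `ε_a - ε_b` of the variable `x_{ab}`, as an element of the character lattice
`ℤⁿ` of the diagonal torus. -/
def torusWeight (c : ℕ → ℕ) (n : ℕ) (p : Pos c n) : Fin n → ℤ :=
  Pi.single p.1.1 1 - Pi.single p.1.2 1

theorem weight_torusWeight_apply {c : ℕ → ℕ} {n : ℕ} (ν : Pos c n →₀ ℕ) (q : Fin n) :
    Finsupp.weight (torusWeight c n) ν q =
      ∑ p ∈ ν.support, (ν p : ℤ) *
        ((if p.1.1 = q then 1 else 0) - (if p.1.2 = q then 1 else 0)) := by
  simp only [Finsupp.weight_apply, Finsupp.sum, Finset.sum_apply, torusWeight,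
    Pi.sub_apply, Pi.single_apply, nsmul_eq_mul, Pi.mul_apply, Pi.natCast_apply, eq_comm (a := q)]

/-- The grading of `R` by the character lattice of the diagonal torus. -/
abbrev torusGrading (c : ℕ → ℕ) (n : ℕ) (χ : Fin n → ℤ) : Submodule ℂ (MvPolynomial (Pos c n) ℂ) :=
  weightedHomogeneousSubmodule ℂ (torusWeight c n) χ

instance torusGrading.gradedMonoid (c : ℕ → ℕ) (n : ℕ) : SetLike.GradedMonoid (torusGrading c n) :=
  WeightedHomogeneousSubmodule.gradedMonoid

theorem genX_mem_torusGrading (c : ℕ → ℕ) (n : ℕ) (a b : Fin n) :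
    genX c n a b ∈ torusGrading c n (Pi.single a 1 - Pi.single b 1) := by
  rw [genX, Matrix.of_apply]
  split_ifs with hab
  · exact isWeightedHomogeneous_X ℂ (torusWeight c n) ⟨(a, b), hab⟩
  · exact zero_mem _

section Minor

variable (c : ℕ → ℕ) {n m : ℕ} (hm : m + c 1 = n)

/-- The position in `𝒳` of row `i` of `M(t)`. -/
def rowIndex (i : Fin m) : Fin n := Fin.cast hm (i.addNat (c 1))

/-- The position in `𝒳` of column `j` of `M(t)`. -/
def colIndex (j : Fin m) : Fin n := Fin.castLE (Nat.le.intro hm) j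

theorem rowIndex_injective : Function.Injective (rowIndex c hm) :=
  (Fin.cast_injective hm).comp (Fin.addNatEmb (c 1)).injective

theorem colIndex_injective : Function.Injective (colIndex c hm) :=
  Fin.castLE_injective (Nat.le.intro hm)

theorem range_rowIndex : Set.range (rowIndex c hm) = {a : Fin n | c 1 ≤ (a : ℕ)} := by
  ext a
  constructor
  · rintro ⟨i, rfl⟩
    exact Nat.le_add_left _ _
  · intro ha
    exact ⟨⟨a - c 1, Nat.sub_lt_right_of_lt_add ha (hm ▸ a.isLt)⟩, Fin.ext (Nat.sub_add_cancel ha)⟩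

theorem range_colIndex : Set.range (colIndex c hm) = {a : Fin n | (a : ℕ) < m} :=
  Fin.range_castLE (Nat.le.intro hm)

theorem Mmat_apply (i j : Fin m) :
    Mmat c n m hm i j = Polynomial.C (genX c n (rowIndex c hm i) (colIndex c hm j)) +
      if rowIndex c hm i = colIndex c hm j then Polynomial.X else 0 :=
  rfl

theorem Mmat_mem_coeffGrading (i j : Fin m) :
    Mmat c n m hm i j ∈ coeffGrading (torusGrading c n)
      (Pi.single (rowIndex c hm i) 1 - Pi.single (colIndex c hm j) 1) := by
  rw [Mmat_apply]
  refine add_mem (C_mem_coeffGrading (genX_mem_torusGrading c n _ _)) ?_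
  split_ifs with hij
  · rw [hij, sub_self]
    exact X_mem_coeffGrading
  · exact zero_mem _

theorem det_Mmat_mem_coeffGrading :
    (Mmat c n m hm).det ∈ coeffGrading (torusGrading c n)
      (∑ i, Pi.single (rowIndex c hm i) 1 - ∑ j, Pi.single (colIndex c hm j) 1) := by
  rw [sub_eq_add_neg, ← Finset.sum_neg_distrib]
  refine det_mem_graded _ fun i j => ?_
  rw [← sub_eq_add_neg]
  exact Mmat_mem_coeffGrading c hm i j

end Minor

theorem BS_element_weight_vector_general (c : ℕ → ℕ) {n m : ℕ} (hm : m + c 1 = n) (k : ℕ)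
    {ν : Pos c n →₀ ℕ} (hν : ν ∈ ((Mmat c n m hm).det.coeff k).support) (q : Fin n) :
    ∑ p ∈ ν.support, (ν p : ℤ) *
        ((if p.1.1 = q then 1 else 0) - (if p.1.2 = q then 1 else 0)) =
      (if c 1 ≤ (q : ℕ) then 1 else 0) - (if (q : ℕ) < m then 1 else 0) := by
  have hweight : Finsupp.weight (torusWeight c n) ν =
      ∑ i, Pi.single (rowIndex c hm i) 1 - ∑ j, Pi.single (colIndex c hm j) 1 :=
    det_Mmat_mem_coeffGrading c hm k (mem_support_iff.mp hν)
  rw [← weight_torusWeight_apply, hweight,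
    sum_single_eq_indicator_range (rowIndex_injective c hm),
    sum_single_eq_indicator_range (colIndex_injective c hm), range_rowIndex, range_colIndex]
  simp only [Pi.sub_apply, Set.indicator_apply, Set.mem_ofPred_eq, Pi.one_apply]

theorem add_le_blkSum {c : ℕ → ℕ} {i j l : ℕ} (hi : 1 ≤ i) (hij : i < j) (hj : j ≤ l) :
    c i + c j ≤ blkSum c l := by
  rw [← Finset.sum_pair hij.ne]
  refine Finset.sum_le_sum_of_subset fun x hx => ?_
  rw [Finset.mem_insert, Finset.mem_singleton] at hx
  rw [Finset.mem_Icc]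
  omega

/-- 2.20: the Benlolo–Sanderson element `f` is a weight vector of weight
`-(β₁ + ⋯ + β_c) = -Σ_{i=1}^{c} (ε_i - ε_{n+1-i})` for the diagonal torus: each monomial of
`f` has, for every `q ∈ {1,…,n}`, total `ε_q`-degree `1` if `q > n - c`, `-1` if `q ≤ c`,
and `0` otherwise. -/
theorem BS_element_weight_vector
    (l : ℕ) (hl : 2 ≤ l) (c : ℕ → ℕ) (hc : ∀ i ∈ Finset.Icc 1 l, 0 < c i)
    (hcl : c l = c 1) (n : ℕ) (hn : n = blkSum c l) (m : ℕ) (hm : m + c 1 = n)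
    (ν : Pos c n →₀ ℕ) (hν : ν ∈ (BSf c l n m hm).support) (q : Fin n) :
    ∑ p ∈ ν.support, (ν p : ℤ) *
        ((if p.1.1 = q then 1 else 0) - (if p.1.2 = q then 1 else 0)) =
      if n - c 1 < (q : ℕ) + 1 then 1 else if (q : ℕ) + 1 ≤ c 1 then -1 else 0 := by
  have hsum : c 1 + c l ≤ blkSum c l := add_le_blkSum le_rfl hl le_rfl
  rw [BS_element_weight_vector_general c hm _ hν]
  split_ifs <;> omega

end
end

section
/- If the system (1)–(3) has a solution with all b_i real, then c_s ≠ c for every s with 2 ≤ s ≤ l−1. Conversely, if c_s ≠ c for every s with 2 ≤ s ≤ l−1, then the system has a solution in which every b_i is a nonnegative integer, namely b_2 = max(c,c_2) − 1 and b_i = c_{i−1} + max(c,c_i) − max(c,c_{i−1}) for 2 < i ≤ l. -/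
open Finset

/-!
Write `P_s` for the sum of `c_i` over `2 ≤ i < s`. Subtracting (2) from (3) turns (2) into a lower
bound on the partial sum `B_s` of the `b_i` over `2 ≤ i ≤ s`, so (1) and (2) together say
`P_s + min (c, c_s) ≤ B_s` and `1 + B_s ≤ P_s + max (c, c_s)`. These are compatible exactly when
`1 ≤ max (c, c_s) - min (c, c_s) = |c_s - c|`, which for integers means `c_s ≠ c`. The explicit `b`
is the one attaining equality in (1) for every `s`, including `s = l`, where (1) becomes (3).
-/

section IntervalSums

variable {M : Type*} [AddCommMonoid M] (f : ℕ → M) {m n k : ℕ}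

lemma sum_Icc_pred_add_self (hn : 0 < n) (hmn : m ≤ n) :
    ∑ i ∈ Icc m (n - 1), f i + f n = ∑ i ∈ Icc m n, f i := by
  obtain ⟨j, rfl⟩ := Nat.exists_eq_add_of_lt hn
  simpa only [zero_add, Nat.add_sub_cancel] using
    (sum_Icc_succ_top (by simpa only [zero_add] using hmn) f).symm

lemma sum_Icc_consecutive (hmn : m ≤ n + 1) (hnk : n ≤ k) :
    ∑ i ∈ Icc m n, f i + ∑ i ∈ Icc (n + 1) k, f i = ∑ i ∈ Icc m k, f i :=
  sum_Ico_consecutive f hmn (Nat.succ_le_succ hnk)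

end IntervalSums

section OrderedGroup

variable {G : Type*} [AddCommGroup G] [LinearOrder G]

/-- `b` solves the system (1)–(3) of the paper for the data `c`, with values in any ordered group
and with an arbitrary element `e` in place of the constant `1`. The paper's `c` is `c l`. -/
def IsBSSolution (l : ℕ) (e : G) (c b : ℕ → G) : Prop :=
  (∀ s, 2 ≤ s → s ≤ l - 1 →
    e + ∑ i ∈ Icc 2 s, b i ≤ ∑ i ∈ Icc 2 (s - 1), c i + max (c l) (c s)) ∧
  (∀ s, 2 ≤ s → s ≤ l - 1 →
    e + ∑ i ∈ Icc (s + 1) l, b i ≤ ∑ i ∈ Icc (s + 1) (l - 1), c i + max (c l) (c s)) ∧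
  e + ∑ i ∈ Icc 2 l, b i = ∑ i ∈ Icc 2 l, c i

variable {l s : ℕ} {e : G} {b c : ℕ → G}

lemma add_sum_Icc_eq_of_recurrence {d : G} (h_two : b 2 = max d (c 2) - e)
    (h_rec : ∀ i, 2 < i → i ≤ l → b i = c (i - 1) + max d (c i) - max d (c (i - 1)))
    (hs : 2 ≤ s) (hsl : s ≤ l) :
    e + ∑ i ∈ Icc 2 s, b i = ∑ i ∈ Icc 2 (s - 1), c i + max d (c s) := by
  induction s, hs using Nat.le_induction with
  | base => simp [h_two]
  | succ s hs ih =>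
    have hb : b (s + 1) = c s + max d (c (s + 1)) - max d (c s) := h_rec (s + 1) (by lia) hsl
    calc e + ∑ i ∈ Icc 2 (s + 1), b i
        = e + ∑ i ∈ Icc 2 s, b i + b (s + 1) := by
          rw [sum_Icc_succ_top (by lia), add_assoc]
      _ = ∑ i ∈ Icc 2 (s - 1), c i + c s + max d (c (s + 1)) := by
          rw [ih (by lia), hb]
          abel
      _ = ∑ i ∈ Icc 2 (s + 1 - 1), c i + max d (c (s + 1)) := by
          rw [sum_Icc_pred_add_self c (by lia) hs, Nat.add_sub_cancel]

variable [IsOrderedAddMonoid G]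

lemma add_sum_tail_le_iff (h_total : e + ∑ i ∈ Icc 2 l, b i = ∑ i ∈ Icc 2 l, c i)
    (hs : 2 ≤ s) (hsl : s < l) :
    e + ∑ i ∈ Icc (s + 1) l, b i ≤ ∑ i ∈ Icc (s + 1) (l - 1), c i + max (c l) (c s) ↔
      ∑ i ∈ Icc 2 (s - 1), c i + min (c l) (c s) ≤ ∑ i ∈ Icc 2 s, b i := by
  have h_split : e + (∑ i ∈ Icc 2 s, b i + ∑ i ∈ Icc (s + 1) l, b i) =
      ∑ i ∈ Icc 2 (s - 1), c i + c s + (∑ i ∈ Icc (s + 1) (l - 1), c i + c l) := by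
    rw [sum_Icc_consecutive b (by lia) hsl.le, h_total, sum_Icc_pred_add_self c (by lia) hs,
      sum_Icc_pred_add_self c (by lia) hsl, sum_Icc_consecutive c (by lia) hsl.le]
  have h_min_max : min (c l) (c s) + max (c l) (c s) = c l + c s := min_add_max _ _
  have h_balance :
      (∑ i ∈ Icc 2 (s - 1), c i + min (c l) (c s)) +
          (∑ i ∈ Icc (s + 1) (l - 1), c i + max (c l) (c s)) =
        ∑ i ∈ Icc 2 s, b i + (e + ∑ i ∈ Icc (s + 1) l, b i) := by
    rw [add_add_add_comm, h_min_max, add_left_comm (∑ i ∈ Icc 2 s, b i), h_split]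
    abel
  rw [← add_le_add_iff_left (∑ i ∈ Icc 2 (s - 1), c i + min (c l) (c s)), h_balance,
    add_le_add_iff_right]

lemma IsBSSolution.le_abs_sub (h : IsBSSolution l e c b) (hs : 2 ≤ s) (hsl : s ≤ l - 1) :
    e ≤ |c s - c l| := by
  obtain ⟨h_head, h_tail, h_total⟩ := h
  have h_lower := (add_sum_tail_le_iff h_total hs (by lia)).1 (h_tail s hs hsl)
  have h_gap : e + min (c l) (c s) ≤ max (c l) (c s) := by
    refine le_of_add_le_add_left (a := ∑ i ∈ Icc 2 (s - 1), c i) ?_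
    calc ∑ i ∈ Icc 2 (s - 1), c i + (e + min (c l) (c s))
        = e + (∑ i ∈ Icc 2 (s - 1), c i + min (c l) (c s)) := add_left_comm _ _ _
      _ ≤ e + ∑ i ∈ Icc 2 s, b i := by gcongr
      _ ≤ ∑ i ∈ Icc 2 (s - 1), c i + max (c l) (c s) := h_head s hs hsl
  rw [← max_sub_min_eq_abs]
  exact le_sub_right_of_add_le h_gap

lemma isBSSolution_of_add_sum_Icc_eq (hl : 2 ≤ l)
    (h_gap : ∀ s, 2 ≤ s → s ≤ l - 1 → e ≤ |c s - c l|)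
    (h_eq : ∀ s, 2 ≤ s → s ≤ l →
      e + ∑ i ∈ Icc 2 s, b i = ∑ i ∈ Icc 2 (s - 1), c i + max (c l) (c s)) :
    IsBSSolution l e c b := by
  have h_total : e + ∑ i ∈ Icc 2 l, b i = ∑ i ∈ Icc 2 l, c i := by
    rw [h_eq l hl le_rfl, max_self, sum_Icc_pred_add_self c (by lia) hl]
  refine ⟨fun s hs hsl ↦ (h_eq s hs (by lia)).le, fun s hs hsl ↦ ?_, h_total⟩
  rw [add_sum_tail_le_iff h_total hs (by lia)]
  have h_min : e + min (c l) (c s) ≤ max (c l) (c s) := by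
    rw [← le_sub_iff_add_le, max_sub_min_eq_abs]
    exact h_gap s hs hsl
  refine le_of_add_le_add_left (a := e) ?_
  calc e + (∑ i ∈ Icc 2 (s - 1), c i + min (c l) (c s))
      = ∑ i ∈ Icc 2 (s - 1), c i + (e + min (c l) (c s)) := add_left_comm _ _ _
    _ ≤ ∑ i ∈ Icc 2 (s - 1), c i + max (c l) (c s) := by gcongr
    _ = e + ∑ i ∈ Icc 2 s, b i := (h_eq s hs (by lia)).symm

theorem BS_inequality_system_general (hl : 2 ≤ l) :
    ((∃ b, IsBSSolution l e c b) → ∀ s, 2 ≤ s → s ≤ l - 1 → e ≤ |c s - c l|) ∧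
    ((∀ s, 2 ≤ s → s ≤ l - 1 → e ≤ |c s - c l|) →
      ∀ b : ℕ → G,
        b 2 = max (c l) (c 2) - e →
        (∀ i, 2 < i → i ≤ l → b i = c (i - 1) + max (c l) (c i) - max (c l) (c (i - 1))) →
        IsBSSolution l e c b) :=
  ⟨fun ⟨_, hb⟩ _ hs hsl ↦ hb.le_abs_sub hs hsl, fun h_gap _ h_two h_rec ↦
    isBSSolution_of_add_sum_Icc_eq hl h_gap fun _ ↦ add_sum_Icc_eq_of_recurrence h_two h_rec⟩

end OrderedGroup

section NatCast

variable {R : Type*} [Ring R] [LinearOrder R] [IsStrictOrderedRing R]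

lemma one_le_abs_natCast_sub_iff {m n : ℕ} : 1 ≤ |(m : R) - n| ↔ m ≠ n := by
  have h_cast : 1 ≤ |(m : R) - n| ↔ 1 ≤ |(m : ℤ) - n| := by exact_mod_cast Iff.rfl
  rw [h_cast, Order.one_le_iff_pos, abs_pos, sub_ne_zero, Ne, Nat.cast_inj]

lemma natCast_add_max_sub_max (d m n : ℕ) :
    ((m + max d n - max d m : ℕ) : R) = m + max (d : R) n - max (d : R) m := by
  have h_le : max d m ≤ m + max d n := by lia
  rw [Nat.cast_sub h_le, Nat.cast_add, Nat.cast_max, Nat.cast_max]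

end NatCast

/-- Lemma 4.1: the system
(1) `1 + Σ_{i=2}^{s} b_i ≤ Σ_{i=2}^{s-1} c_i + max (c, c_s)` for `s = 2, …, l-1`,
(2) `1 + Σ_{i=s+1}^{l} b_i ≤ Σ_{i=s+1}^{l-1} c_i + max (c, c_s)` for `s = 2, …, l-1`,
(3) `1 + Σ_{i=2}^{l} b_i = Σ_{i=2}^{l} c_i`
has a real solution only if `c_s ≠ c` for all `2 ≤ s ≤ l-1`; conversely if the latter holds
then the explicit nonnegative integers `b_2 = max (c, c_2) - 1`,
`b_i = c_{i-1} + max (c, c_i) - max (c, c_{i-1})` solve it. -/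
theorem BS_inequality_system
    (l : ℕ) (hl : 2 ≤ l) (c : ℕ) (hc : 0 < c) (cc : ℕ → ℕ)
    (hcc : ∀ i, 2 ≤ i → i ≤ l → 0 < cc i) (hccl : cc l = c) :
    ((∃ b : ℕ → ℝ,
        (∀ s, 2 ≤ s → s ≤ l - 1 →
          1 + ∑ i ∈ Finset.Icc 2 s, b i ≤
            (∑ i ∈ Finset.Icc 2 (s - 1), (cc i : ℝ)) + (max c (cc s) : ℕ)) ∧
        (∀ s, 2 ≤ s → s ≤ l - 1 →
          1 + ∑ i ∈ Finset.Icc (s + 1) l, b i ≤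
            (∑ i ∈ Finset.Icc (s + 1) (l - 1), (cc i : ℝ)) + (max c (cc s) : ℕ)) ∧
        (1 + ∑ i ∈ Finset.Icc 2 l, b i = ∑ i ∈ Finset.Icc 2 l, (cc i : ℝ))) →
      ∀ s, 2 ≤ s → s ≤ l - 1 → cc s ≠ c) ∧
    ((∀ s, 2 ≤ s → s ≤ l - 1 → cc s ≠ c) →
      ∀ bn : ℕ → ℕ,
        bn 2 = max c (cc 2) - 1 →
        (∀ i, 2 < i → i ≤ l → bn i = cc (i - 1) + max c (cc i) - max c (cc (i - 1))) →
        (∀ s, 2 ≤ s → s ≤ l - 1 →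
          1 + ∑ i ∈ Finset.Icc 2 s, (bn i : ℝ) ≤
            (∑ i ∈ Finset.Icc 2 (s - 1), (cc i : ℝ)) + (max c (cc s) : ℕ)) ∧
        (∀ s, 2 ≤ s → s ≤ l - 1 →
          1 + ∑ i ∈ Finset.Icc (s + 1) l, (bn i : ℝ) ≤
            (∑ i ∈ Finset.Icc (s + 1) (l - 1), (cc i : ℝ)) + (max c (cc s) : ℕ)) ∧
        (1 + ∑ i ∈ Finset.Icc 2 l, (bn i : ℝ) = ∑ i ∈ Finset.Icc 2 l, (cc i : ℝ))) := by
  subst hccl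
  have h_max_two : 0 < max (cc l) (cc 2) := lt_max_of_lt_left hc
  simp only [Nat.cast_max]
  obtain ⟨h_nec, h_suf⟩ :=
    BS_inequality_system_general (e := (1 : ℝ)) (c := fun i ↦ (cc i : ℝ)) hl
  simp only [one_le_abs_natCast_sub_iff] at h_nec h_suf
  refine ⟨h_nec, fun h_ne bn h_two h_rec ↦ h_suf h_ne (fun i ↦ bn i) ?_ fun i hi hil ↦ ?_⟩
  · rw [h_two, Nat.cast_pred h_max_two, Nat.cast_max]
  · rw [h_rec i hi hil, natCast_add_max_sub_max]
end

section
/- Let (T_a)_{a≥1} and (S_a)_{a≥1} be the row systems of two Young tableaux whose entry sets are disjoint (no integer occurs as an entry of both). Then the merged system (T_a ∪ S_a)_{a≥1} is again the row system of a Young tableau: |T_{a+1} ∪ S_{a+1}| ≤ |T_a ∪ S_a| for all a, and for every a and every k with 1 ≤ k ≤ |T_{a+1} ∪ S_{a+1}|, the k-th smallest element of T_{a+1} ∪ S_{a+1} is strictly greater than the k-th smallest element of T_a ∪ S_a. -/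
open Finset

/-- The `k`-th smallest element of a finite set of naturals (1-indexed; junk value `0` if
`k` is out of range). -/
def kthSmall (s : Finset ℕ) (k : ℕ) : ℕ := (s.sort (· ≤ ·)).getD (k - 1) 0

/-!
Row `B` fits under row `A` exactly when, for every bound `m`, at least as many entries of `A` are
`< m` as entries of `B` are `≤ m`. This criterion is additive: the counts of two disjoint upper
rows sum exactly to that of their union, and those of two lower rows sum to at least that of
theirs.
-/

section LinearOrder

variable {α : Type*} [LinearOrder α] {A B A' B' : Finset α}

/-- Two consecutive rows of a Young tableau, `A` directly above `B`: every column that meets `B`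
also meets `A` and increases strictly downwards. Columns are indexed from `0`, and the inequality
`#B ≤ #A` of row lengths is encoded in the existential. -/
def ColumnStrict (A B : Finset α) : Prop :=
  ∀ i (hB : i < #B), ∃ hA : i < #A, A.orderEmbOfFin rfl ⟨i, hA⟩ < B.orderEmbOfFin rfl ⟨i, hB⟩

theorem orderEmbOfFin_mem_iff_lt_card_filter {L : Set α} [DecidablePred (· ∈ L)]
    (hL : IsLowerSet L) (s : Finset α) {k : ℕ} (h : #s = k) (i : Fin k) :
    s.orderEmbOfFin h i ∈ L ↔ i < #{x ∈ s | x ∈ L} := by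
  set e := s.orderEmbOfFin h
  constructor
  · intro hi
    have initial_subset : (Iic i).map e.toEmbedding ⊆ {x ∈ s | x ∈ L} := by
      intro x hx
      obtain ⟨j, hj, rfl⟩ := mem_map.1 hx
      exact mem_filter.2 ⟨s.orderEmbOfFin_mem h j, hL (e.monotone (mem_Iic.1 hj)) hi⟩
    simpa [Nat.succ_le_iff] using card_le_card initial_subset
  · contrapose!
    intro hi
    have subset_initial : {x ∈ s | x ∈ L} ⊆ (Iio i).map e.toEmbedding := by
      intro x hx
      obtain ⟨hxs, hxL⟩ := mem_filter.1 hx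
      obtain ⟨j, rfl⟩ : x ∈ Set.range e := by rwa [range_orderEmbOfFin]
      have hji : j < i := lt_of_not_ge fun hij => hi (hL (e.monotone hij) hxL)
      exact mem_map_of_mem _ (mem_Iio.2 hji)
    simpa using card_le_card subset_initial

theorem columnStrict_iff_card_filter_le :
    ColumnStrict A B ↔ ∀ m, #{x ∈ B | x ≤ m} ≤ #{x ∈ A | x < m} := by
  constructor
  · intro h m
    refine le_of_forall_lt fun i hi => ?_
    have hB : i < #B := hi.trans_le (card_filter_le _ _)
    obtain ⟨hA, hAB⟩ := h i hB
    have hBm : B.orderEmbOfFin rfl ⟨i, hB⟩ ≤ m :=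
      (orderEmbOfFin_mem_iff_lt_card_filter (isLowerSet_Iic m) B rfl ⟨i, hB⟩).2 hi
    exact (orderEmbOfFin_mem_iff_lt_card_filter (isLowerSet_Iio m) A rfl ⟨i, hA⟩).1
      (hAB.trans_le hBm)
  · intro h i hB
    set m := B.orderEmbOfFin rfl ⟨i, hB⟩
    have hBm : i < #{x ∈ B | x ≤ m} :=
      (orderEmbOfFin_mem_iff_lt_card_filter (isLowerSet_Iic m) B rfl ⟨i, hB⟩).1 le_rfl
    have hi : i < #{x ∈ A | x < m} := hBm.trans_le (h m)
    have hA : i < #A := hi.trans_le (card_filter_le _ _)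
    exact ⟨hA, (orderEmbOfFin_mem_iff_lt_card_filter (isLowerSet_Iio m) A rfl ⟨i, hA⟩).2 hi⟩

theorem ColumnStrict.union (h : ColumnStrict A B) (h' : ColumnStrict A' B')
    (hAA' : Disjoint A A') : ColumnStrict (A ∪ A') (B ∪ B') := by
  rw [columnStrict_iff_card_filter_le] at h h' ⊢
  intro m
  calc #{x ∈ B ∪ B' | x ≤ m}
      ≤ #{x ∈ B | x ≤ m} + #{x ∈ B' | x ≤ m} := by rw [filter_union]; exact card_union_le _ _
    _ ≤ #{x ∈ A | x < m} + #{x ∈ A' | x < m} := add_le_add (h m) (h' m)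
    _ = #{x ∈ A ∪ A' | x < m} := by
      rw [filter_union, card_union_of_disjoint (disjoint_filter_filter hAA')]

theorem merge_row_systems_isYoungTableau_general {T S : ℕ → Finset α}
    (hT : ∀ a, 1 ≤ a → ColumnStrict (T a) (T (a + 1)))
    (hS : ∀ a, 1 ≤ a → ColumnStrict (S a) (S (a + 1)))
    (hTS : ∀ a, 1 ≤ a → Disjoint (T a) (S a)) :
    ∀ a, 1 ≤ a → ColumnStrict (T a ∪ S a) (T (a + 1) ∪ S (a + 1)) :=
  fun a ha => (hT a ha).union (hS a ha) (hTS a ha)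

end LinearOrder

theorem kthSmall_add_one_eq_orderEmbOfFin (s : Finset ℕ) (i : Fin #s) :
    kthSmall s (i + 1) = s.orderEmbOfFin rfl i := by
  simp [kthSmall, orderEmbOfFin_apply]

theorem columnStrict_iff_kthSmall_lt {A B : Finset ℕ} :
    ColumnStrict A B ↔ #B ≤ #A ∧ ∀ k, 1 ≤ k → k ≤ #B → kthSmall A k < kthSmall B k := by
  constructor
  · intro h
    refine ⟨le_of_forall_lt fun i hi => (h i hi).1, fun k hk hkB => ?_⟩
    obtain ⟨i, rfl⟩ := Nat.exists_eq_add_of_le' hk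
    obtain ⟨hA, hAB⟩ := h i hkB
    rwa [← kthSmall_add_one_eq_orderEmbOfFin, ← kthSmall_add_one_eq_orderEmbOfFin] at hAB
  · rintro ⟨hcard, hlt⟩ i hB
    refine ⟨hB.trans_le hcard, ?_⟩
    rw [← kthSmall_add_one_eq_orderEmbOfFin, ← kthSmall_add_one_eq_orderEmbOfFin]
    exact hlt (i + 1) (Nat.le_add_left 1 i) hB

/-- Lemma 2.7: if `(T_a)` and `(S_a)` are the row systems of two Young tableaux with disjoint
entry sets, then the merged system `(T_a ∪ S_a)` is again the row system of a Young tableau. -/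
theorem merge_row_systems_isYoungTableau
    (T S : ℕ → Finset ℕ)
    (hTpos : ∀ a, 1 ≤ a → ∀ x ∈ T a, 0 < x)
    (hSpos : ∀ a, 1 ≤ a → ∀ x ∈ S a, 0 < x)
    (hTfin : ∃ N, ∀ a, N ≤ a → T a = ∅)
    (hSfin : ∃ N, ∀ a, N ≤ a → S a = ∅)
    (hTrows : ∀ a a', 1 ≤ a → 1 ≤ a' → a ≠ a' → Disjoint (T a) (T a'))
    (hSrows : ∀ a a', 1 ≤ a → 1 ≤ a' → a ≠ a' → Disjoint (S a) (S a'))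
    (hTcard : ∀ a, 1 ≤ a → (T (a + 1)).card ≤ (T a).card)
    (hScard : ∀ a, 1 ≤ a → (S (a + 1)).card ≤ (S a).card)
    (hTcol : ∀ a, 1 ≤ a → ∀ k, 1 ≤ k → k ≤ (T (a + 1)).card →
      kthSmall (T a) k < kthSmall (T (a + 1)) k)
    (hScol : ∀ a, 1 ≤ a → ∀ k, 1 ≤ k → k ≤ (S (a + 1)).card →
      kthSmall (S a) k < kthSmall (S (a + 1)) k)
    (hTS : ∀ a a', 1 ≤ a → 1 ≤ a' → Disjoint (T a) (S a')) :
    (∀ a, 1 ≤ a → (T (a + 1) ∪ S (a + 1)).card ≤ (T a ∪ S a).card) ∧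
    (∀ a, 1 ≤ a → ∀ k, 1 ≤ k → k ≤ (T (a + 1) ∪ S (a + 1)).card →
      kthSmall (T a ∪ S a) k < kthSmall (T (a + 1) ∪ S (a + 1)) k) := by
  simpa only [columnStrict_iff_kthSmall_lt, imp_and, forall_and] using
    merge_row_systems_isYoungTableau_general
      (fun a ha => columnStrict_iff_kthSmall_lt.2 ⟨hTcard a ha, hTcol a ha⟩)
      (fun a ha => columnStrict_iff_kthSmall_lt.2 ⟨hScard a ha, hScol a ha⟩)
      (fun a ha => hTS a a ha ha)
end
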